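/- Let ν be a real number with ν ≥ 1. For every integer k ≥ 1 one has λ⁻_{ν,k+1} < λ⁻_{ν−1,k+2} < λ⁻_{ν,k+2}, where λ⁻_{ν,m} denotes the m-th positive zero of z ↦ J_ν(z) − J_{ν+1}(z) and λ⁻_{ν−1,m} the m-th positive zero of z ↦ J_{ν−1}(z) − J_ν(z); that is, the positive zeroes of the differences of Bessel functions of consecutive orders interlace. -/

import Mathlib

/-- Bessel function of the first kind of real order `ν`, defined via its power series
`J_ν(z) = ∑ₘ (−1)^m / (m! Γ(ν+m+1)) (z/2)^(ν+2m)` (with real-exponent powers). -/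
noncomputable def besselJ (ν z : ℝ) : ℝ :=
  ∑' m : ℕ, ((-1 : ℝ) ^ m / (Nat.factorial m * Real.Gamma (ν + m + 1))) *
    (z / 2) ^ (ν + 2 * (m : ℝ))

/-- `x` (indexed by `k ≥ 1`) enumerates the positive zeroes of `f`: it is strictly
increasing on indices `k ≥ 1`, each `x k` is a positive zero of `f`, and every positive
zero of `f` is some `x k`. -/
def EnumPosZeros (f : ℝ → ℝ) (x : ℕ → ℝ) : Prop :=
  StrictMonoOn x (Set.Ici 1) ∧ (∀ k, 1 ≤ k → 0 < x k ∧ f (x k) = 0) ∧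
    ∀ z : ℝ, 0 < z → f z = 0 → ∃ k, 1 ≤ k ∧ x k = z

/-!
Write `D_ν = J_ν - J_{ν+1}`. For `0 < z ≤ ν + 1` one has `0 < J_{ν+1}(z) < J_ν(z)`: for large `ν`
this is read off the alternating power series, and the recurrence
`J_ν + J_{ν+2} = (2 (ν + 1) / z) J_{ν+1}` propagates it downwards in `ν`. Hence `D_ν` is positive
on `(0, ν + 1]` and its positive zeroes exceed `ν + 1`. At a zero of `D_ν` both `D_ν'` and `D_{ν+1}`
are multiples of `J_ν ≠ 0`, and the bound `z > ν + 1` fixes the sign `D_ν' D_{ν+1} < 0`; likewise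
`D_{ν+1}' D_ν > 0` at a zero of `D_{ν+1}`. As the derivative of a function cannot keep its sign at
two consecutive simple zeroes, each difference changes sign between consecutive zeroes of the other.
Positivity near `0` shows that the first zero belongs to `D_ν`.
-/

open Filter Topology Set

section SignChange

variable {f g : ℝ → ℝ} {a b : ℝ}

theorem exists_mem_Ioo_eq_zero_of_mul_neg (hab : a < b) (hf : ContinuousOn f (Icc a b))
    (h : f a * f b < 0) : ∃ x ∈ Ioo a b, f x = 0 := by
  rcases mul_neg_iff.1 h with ⟨ha, hb⟩ | ⟨ha, hb⟩
  · exact intermediate_value_Ioo' hab.le hf ⟨hb, ha⟩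
  · exact intermediate_value_Ioo hab.le hf ⟨ha, hb⟩

theorem deriv_nonneg_of_eventually_pos_right (ha : f a = 0) (h : ∀ᶠ x in 𝓝[>] a, 0 < f x) :
    0 ≤ deriv f a := by
  by_contra! hneg
  have hsign := eventually_nhdsWithin_sign_eq_of_deriv_neg hneg ha
  obtain ⟨x, ⟨hpos, hsign⟩, hax⟩ :=
    ((h.and (hsign.filter_mono nhdsWithin_le_nhds)).and self_mem_nhdsWithin).exists
  rw [sign_pos hpos, sign_neg (sub_neg.2 hax)] at hsign
  exact absurd hsign (by decide)

theorem deriv_nonpos_of_eventually_pos_left (ha : f a = 0) (h : ∀ᶠ x in 𝓝[<] a, 0 < f x) :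
    deriv f a ≤ 0 := by
  by_contra! hpos
  have hsign := eventually_nhdsWithin_sign_eq_of_deriv_pos hpos ha
  obtain ⟨x, ⟨hpos, hsign⟩, hxa⟩ :=
    ((h.and (hsign.filter_mono nhdsWithin_le_nhds)).and self_mem_nhdsWithin).exists
  rw [sign_pos hpos, sign_neg (sub_neg.2 hxa)] at hsign
  exact absurd hsign (by decide)

theorem pos_of_pos_of_forall_ne_zero {s : Set ℝ} (hs : s.OrdConnected) (hf : ContinuousOn f s)
    (hne : ∀ x ∈ s, f x ≠ 0) {x y : ℝ} (hx : x ∈ s) (hy : y ∈ s) (hpos : 0 < f x) : 0 < f y := by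
  by_contra! hle
  obtain ⟨z, hz, hfz⟩ := hs.isPreconnected.intermediate_value hy hx hf ⟨hle, hpos.le⟩
  exact hne z hz hfz

theorem deriv_mul_deriv_nonpos_of_consecutive_zeros (hab : a < b)
    (hf : ContinuousOn f (Ioo a b)) (ha : f a = 0) (hb : f b = 0)
    (hne : ∀ x ∈ Ioo a b, f x ≠ 0) : deriv f a * deriv f b ≤ 0 := by
  wlog hpos : ∃ c ∈ Ioo a b, 0 < f c generalizing f
  · obtain ⟨c, hc⟩ := exists_between hab
    have hfc : f c < 0 := (hne c hc).lt_of_le (not_lt.1 fun h ↦ hpos ⟨c, hc, h⟩)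
    simpa [deriv.neg] using this (f := -f) hf.neg (by simpa) (by simpa)
      (fun x hx ↦ neg_ne_zero.2 (hne x hx)) ⟨c, hc, by simpa⟩
  obtain ⟨c, hc, hfc⟩ := hpos
  have hpos : ∀ x ∈ Ioo a b, 0 < f x := fun x hx ↦
    pos_of_pos_of_forall_ne_zero ordConnected_Ioo hf hne hc hx hfc
  exact mul_nonpos_of_nonneg_of_nonpos
    (deriv_nonneg_of_eventually_pos_right ha (eventually_of_mem (Ioo_mem_nhdsGT hab) hpos))
    (deriv_nonpos_of_eventually_pos_left hb (eventually_of_mem (Ioo_mem_nhdsLT hab) hpos))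

theorem exists_zero_between_consecutive_zeros (hab : a < b)
    (hf : ContinuousOn f (Ioo a b)) (hg : ContinuousOn g (Icc a b)) (ha : f a = 0) (hb : f b = 0)
    (hne : ∀ x ∈ Ioo a b, f x ≠ 0) (h : 0 < (deriv f a * g a) * (deriv f b * g b)) :
    ∃ x ∈ Ioo a b, g x = 0 := by
  have hderiv := deriv_mul_deriv_nonpos_of_consecutive_zeros hab hf ha hb hne
  rw [mul_mul_mul_comm] at h
  exact exists_mem_Ioo_eq_zero_of_mul_neg hab hg (neg_of_mul_pos_right h hderiv)

end SignChange

namespace EnumPosZeros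

variable {f g : ℝ → ℝ} {a b : ℕ → ℝ} {k : ℕ} {z : ℝ}

theorem pos (ha : EnumPosZeros f a) (hk : 1 ≤ k) : 0 < a k := (ha.2.1 k hk).1

theorem apply_eq_zero (ha : EnumPosZeros f a) (hk : 1 ≤ k) : f (a k) = 0 := (ha.2.1 k hk).2

theorem lt_succ (ha : EnumPosZeros f a) (hk : 1 ≤ k) : a k < a (k + 1) :=
  ha.1 hk (Nat.le_succ_of_le hk) k.lt_succ_self

theorem apply_one_le (ha : EnumPosZeros f a) (hz : 0 < z) (hfz : f z = 0) : a 1 ≤ z := by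
  obtain ⟨j, hj, rfl⟩ := ha.2.2 z hz hfz
  exact ha.1.monotoneOn self_mem_Ici hj hj

theorem succ_le_of_lt (ha : EnumPosZeros f a) (hk : 1 ≤ k) (hfz : f z = 0) (hz : a k < z) :
    a (k + 1) ≤ z := by
  obtain ⟨j, hj, rfl⟩ := ha.2.2 z ((ha.pos hk).trans hz) hfz
  exact ha.1.monotoneOn (Nat.le_succ_of_le hk) hj ((ha.1.lt_iff_lt hk hj).1 hz)

theorem exists_zero_between (ha : EnumPosZeros f a) (hk : 1 ≤ k) (hf : ContinuousOn f (Ioi 0))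
    (hg : ContinuousOn g (Ioi 0))
    (h : 0 < (deriv f (a k) * g (a k)) * (deriv f (a (k + 1)) * g (a (k + 1)))) :
    ∃ z ∈ Ioo (a k) (a (k + 1)), g z = 0 :=
  exists_zero_between_consecutive_zeros (ha.lt_succ hk)
    (hf.mono fun _ hx ↦ (ha.pos hk).trans hx.1) (hg.mono fun _ hx ↦ (ha.pos hk).trans_le hx.1)
    (ha.apply_eq_zero hk) (ha.apply_eq_zero (Nat.le_succ_of_le hk))
    (fun _ hx hfx ↦ (ha.succ_le_of_lt hk hfx hx.1).not_gt hx.2) h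

theorem deriv_apply_one_nonpos (ha : EnumPosZeros f a) (hf : ContinuousOn f (Ioi 0))
    (hf0 : ∀ᶠ z in 𝓝[>] 0, 0 < f z) : deriv f (a 1) ≤ 0 := by
  have ha1 := ha.pos le_rfl
  obtain ⟨c, hfc, hc⟩ := (hf0.and (Ioo_mem_nhdsGT ha1)).exists
  have hpos : ∀ z ∈ Ioo 0 (a 1), 0 < f z := fun z hz ↦
    pos_of_pos_of_forall_ne_zero ordConnected_Ioo (hf.mono Ioo_subset_Ioi_self)
      (fun x hx hfx ↦ (ha.apply_one_le hx.1 hfx).not_gt hx.2) hc hz hfc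
  exact deriv_nonpos_of_eventually_pos_left (ha.apply_eq_zero le_rfl)
    (eventually_of_mem (Ioo_mem_nhdsLT ha1) hpos)

theorem apply_one_lt_of_neg (ha : EnumPosZeros f a) (hf : ContinuousOn f (Ioi 0))
    (hf0 : ∀ᶠ z in 𝓝[>] 0, 0 < f z) (hz : 0 < z) (hfz : f z < 0) : a 1 < z := by
  obtain ⟨c, hfc, hc⟩ := (hf0.and (Ioo_mem_nhdsGT hz)).exists
  obtain ⟨x, hx, hfx⟩ := exists_mem_Ioo_eq_zero_of_mul_neg hc.2
    (hf.mono fun _ hy ↦ hc.1.trans_le hy.1) (mul_neg_of_pos_of_neg hfc hfz)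
  exact (ha.apply_one_le (hc.1.trans hx.1) hfx).trans_lt hx.2

theorem interlace_of_exists_zero_between (ha : EnumPosZeros f a) (hb : EnumPosZeros g b)
    (hg : ∀ k, 1 ≤ k → ∃ z ∈ Ioo (a k) (a (k + 1)), g z = 0)
    (hf : ∀ k, 1 ≤ k → ∃ z ∈ Ioo (b k) (b (k + 1)), f z = 0) (h1 : a 1 < b 1) (hk : 1 ≤ k) :
    a k < b k ∧ b k < a (k + 1) := by
  induction k, hk using Nat.le_induction with
  | base =>
    obtain ⟨z, hz, hgz⟩ := hg 1 le_rfl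
    exact ⟨h1, (hb.apply_one_le ((ha.pos le_rfl).trans hz.1) hgz).trans_lt hz.2⟩
  | succ k hk ih =>
    obtain ⟨x, hx, hfx⟩ := hf k hk
    obtain ⟨y, hy, hgy⟩ := hg (k + 1) (Nat.le_succ_of_le hk)
    exact ⟨(ha.succ_le_of_lt hk hfx (ih.1.trans hx.1)).trans_lt hx.2,
      (hb.succ_le_of_lt hk hgy (ih.2.trans hy.1)).trans_lt hy.2⟩

theorem interlace_of_deriv_mul (ha : EnumPosZeros f a) (hb : EnumPosZeros g b)
    (hf : ContinuousOn f (Ioi 0)) (hg : ContinuousOn g (Ioi 0))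
    (hf0 : ∀ᶠ z in 𝓝[>] 0, 0 < f z) (hg0 : ∀ᶠ z in 𝓝[>] 0, 0 < g z)
    (hfg : ∀ z, 0 < z → f z = 0 → deriv f z * g z < 0)
    (hgf : ∀ z, 0 < z → g z = 0 → 0 < deriv g z * f z) (hk : 1 ≤ k) :
    a k < b k ∧ b k < a (k + 1) := by
  have hfg' : ∀ k, 1 ≤ k → deriv f (a k) * g (a k) < 0 := fun k hk ↦
    hfg _ (ha.pos hk) (ha.apply_eq_zero hk)
  have hgf' : ∀ k, 1 ≤ k → 0 < deriv g (b k) * f (b k) := fun k hk ↦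
    hgf _ (hb.pos hk) (hb.apply_eq_zero hk)
  have hfb : f (b 1) < 0 := neg_of_mul_pos_right (hgf' 1 le_rfl) (hb.deriv_apply_one_nonpos hg hg0)
  refine ha.interlace_of_exists_zero_between hb (fun k hk ↦ ?_) (fun k hk ↦ ?_)
    (ha.apply_one_lt_of_neg hf hf0 (hb.pos le_rfl) hfb) hk
  · exact ha.exists_zero_between hk hf hg
      (mul_pos_of_neg_of_neg (hfg' k hk) (hfg' (k + 1) (Nat.le_succ_of_le hk)))
  · exact hb.exists_zero_between hk hg hf
      (mul_pos (hgf' k hk) (hgf' (k + 1) (Nat.le_succ_of_le hk)))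

end EnumPosZeros

section BesselClifford

open scoped Nat

theorem hasDerivAt_tsum_mul_pow {𝕜 : Type*} [RCLike 𝕜] {c : ℕ → 𝕜}
    (hc : ∀ r : 𝕜, Summable fun m : ℕ ↦ (m + 1) * c (m + 1) * r ^ m) (x : 𝕜) :
    HasDerivAt (fun y ↦ ∑' m, c m * y ^ m) (∑' m : ℕ, (m + 1) * c (m + 1) * x ^ m) x := by
  obtain ⟨R, hxR⟩ := exists_gt ‖x‖
  have hR : 0 < R := (norm_nonneg x).trans_lt hxR
  have hbound : Summable fun m : ℕ ↦ ‖(m : 𝕜) * c m‖ * R ^ (m - 1) := by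
    rw [← summable_nat_add_iff 1]
    refine (hc R).norm.congr fun m ↦ ?_
    simp [abs_of_pos hR]
  have hterm (m : ℕ) (y : 𝕜) : HasDerivAt (fun y ↦ c m * y ^ m) (m * c m * y ^ (m - 1)) y :=
    ((hasDerivAt_pow m y).const_mul (c m)).congr_deriv (by ring)
  have hterm_le (m : ℕ) (y : 𝕜) (hy : y ∈ Metric.ball 0 R) :
      ‖m * c m * y ^ (m - 1)‖ ≤ ‖(m : 𝕜) * c m‖ * R ^ (m - 1) := by
    rw [norm_mul, norm_pow]
    gcongr
    exact (mem_ball_zero_iff.1 hy).le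
  have hzero : Summable fun m ↦ c m * (0 : 𝕜) ^ m :=
    summable_of_ne_finset_zero (s := {0}) fun m hm ↦ by simp_all
  refine (hasDerivAt_tsum_of_isPreconnected hbound Metric.isOpen_ball Metric.isPreconnected_ball
    (fun m y _ ↦ hterm m y) hterm_le (Metric.mem_ball_self hR) hzero
    (mem_ball_zero_iff.2 hxR)).congr_deriv ?_
  rw [Summable.tsum_eq_zero_add ((summable_nat_add_iff 1).1 ((hc x).congr fun m ↦ by simp))]
  simp

theorem inv_Gamma_eq_mul_inv_Gamma_add_one (s : ℝ) :
    (Real.Gamma s)⁻¹ = s * (Real.Gamma (s + 1))⁻¹ := by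
  rcases eq_or_ne s 0 with rfl | hs
  · simp
  · rw [Real.Gamma_add_one hs]
    field_simp

/-- Taylor coefficients `1 / (m! Γ(ν + m + 1))` of the Bessel–Clifford function of order `ν`. At a
pole of `Γ` Mathlib's value is `0`, so the inverse is `0` there, as for the entire function `1 / Γ`;
the recurrences in `ν` therefore hold for every real order. -/
noncomputable def besselCliffordCoeff (ν : ℝ) (m : ℕ) : ℝ :=
  (m ! * Real.Gamma (ν + m + 1))⁻¹

/-- The Bessel–Clifford function `C_ν`, the entire function with
`J_ν(z) = (z / 2) ^ ν * C_ν(-(z / 2) ^ 2)`; it separates the power series of `J_ν` from the real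
power of `z`. -/
noncomputable def besselClifford (ν x : ℝ) : ℝ :=
  ∑' m : ℕ, besselCliffordCoeff ν m * x ^ m

theorem besselCliffordCoeff_zero (ν : ℝ) :
    besselCliffordCoeff ν 0 = (Real.Gamma (ν + 1))⁻¹ := by
  simp [besselCliffordCoeff]

theorem besselCliffordCoeff_nonneg {ν : ℝ} (hν : -1 ≤ ν) (m : ℕ) :
    0 ≤ besselCliffordCoeff ν m :=
  inv_nonneg.2 (mul_nonneg (by positivity)
    (Real.Gamma_nonneg_of_nonneg (by linarith [m.cast_nonneg (α := ℝ)])))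

theorem succ_mul_besselCliffordCoeff_succ (ν : ℝ) (m : ℕ) :
    (m + 1) * besselCliffordCoeff ν (m + 1) = besselCliffordCoeff (ν + 1) m := by
  rw [besselCliffordCoeff, besselCliffordCoeff, Nat.factorial_succ,
    show ν + (m + 1 : ℕ) + 1 = ν + 1 + m + 1 by push_cast; ring]
  push_cast
  field_simp

theorem besselCliffordCoeff_eq_mul_add_one (ν : ℝ) (m : ℕ) :
    besselCliffordCoeff ν m = (ν + 1 + m) * besselCliffordCoeff (ν + 1) m := by
  rw [besselCliffordCoeff, besselCliffordCoeff, mul_inv, mul_inv,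
    inv_Gamma_eq_mul_inv_Gamma_add_one, add_right_comm ν m 1]
  ring

theorem summable_besselCliffordCoeff_mul_pow (ν x : ℝ) :
    Summable fun m ↦ besselCliffordCoeff ν m * x ^ m := by
  refine (Real.summable_pow_div_factorial |x|).of_norm_bounded_eventually_nat ?_
  filter_upwards [eventually_ge_atTop ⌈1 - ν⌉₊] with m hm
  have harg : 2 ≤ ν + m + 1 := by linarith [Nat.ceil_le.1 hm]
  have hGamma : 1 ≤ Real.Gamma (ν + m + 1) := calc
    1 = Real.Gamma 2 := Real.Gamma_two.symm
    _ ≤ _ := Real.Gamma_strictMonoOn_Ici.monotoneOn self_mem_Ici harg harg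
  rw [besselCliffordCoeff, norm_mul, norm_pow, Real.norm_eq_abs x, div_eq_inv_mul,
    Real.norm_of_nonneg (by positivity)]
  gcongr
  exact le_mul_of_one_le_right (by positivity) hGamma

theorem hasSum_besselClifford (ν x : ℝ) :
    HasSum (fun m ↦ besselCliffordCoeff ν m * x ^ m) (besselClifford ν x) :=
  (summable_besselCliffordCoeff_mul_pow ν x).hasSum

theorem hasDerivAt_besselClifford (ν x : ℝ) :
    HasDerivAt (besselClifford ν) (besselClifford (ν + 1) x) x := by
  have hsum : ∀ r : ℝ, Summable fun m : ℕ ↦ (m + 1) * besselCliffordCoeff ν (m + 1) * r ^ m := by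
    simpa only [succ_mul_besselCliffordCoeff_succ] using
      summable_besselCliffordCoeff_mul_pow (ν + 1)
  refine (hasDerivAt_tsum_mul_pow hsum x).congr_deriv ?_
  simp only [succ_mul_besselCliffordCoeff_succ, besselClifford]

theorem besselClifford_recurrence (ν x : ℝ) :
    besselClifford ν x =
      (ν + 1) * besselClifford (ν + 1) x + x * besselClifford (ν + 2) x := by
  have hterm (m : ℕ) : (m + 1 : ℕ) * besselCliffordCoeff (ν + 1) (m + 1) * x ^ (m + 1) =
      x * (besselCliffordCoeff (ν + 2) m * x ^ m) := by
    rw [Nat.cast_add_one, succ_mul_besselCliffordCoeff_succ, add_assoc, one_add_one_eq_two]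
    ring
  have hshift : HasSum (fun m : ℕ ↦ m * besselCliffordCoeff (ν + 1) m * x ^ m)
      (x * besselClifford (ν + 2) x) := by
    rw [← hasSum_nat_add_iff' 1]
    simpa only [hterm, Finset.sum_range_one, Nat.cast_zero, zero_mul, sub_zero] using
      (hasSum_besselClifford (ν + 2) x).mul_left x
  refine (hasSum_besselClifford ν x).unique
    ((((hasSum_besselClifford (ν + 1) x).mul_left (ν + 1)).add hshift).congr_fun fun m ↦ ?_)
  rw [besselCliffordCoeff_eq_mul_add_one]
  ring

section AlternatingBounds

variable {ν t : ℝ}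

theorem antitone_besselCliffordCoeff_mul_pow (ht : 0 ≤ t) (htν : t ≤ ν + 1) :
    Antitone fun m ↦ besselCliffordCoeff ν m * t ^ m := by
  refine antitone_nat_of_succ_le fun m ↦ ?_
  have hcoeff := besselCliffordCoeff_nonneg (by linarith : -1 ≤ ν) (m + 1)
  have hratio : t ≤ (ν + 1 + m) * (m + 1) := by
    nlinarith [m.cast_nonneg (α := ℝ), mul_nonneg (ht.trans htν) (m.cast_nonneg (α := ℝ))]
  calc besselCliffordCoeff ν (m + 1) * t ^ (m + 1)
      = t * (besselCliffordCoeff ν (m + 1) * t ^ m) := by ring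
    _ ≤ (ν + 1 + m) * (m + 1) * (besselCliffordCoeff ν (m + 1) * t ^ m) := by gcongr
    _ = besselCliffordCoeff ν m * t ^ m := by
      rw [besselCliffordCoeff_eq_mul_add_one ν m, ← succ_mul_besselCliffordCoeff_succ]
      ring

theorem tendsto_alternating_sum_besselClifford (ν t : ℝ) :
    Tendsto (fun n ↦ ∑ m ∈ Finset.range n, (-1) ^ m * (besselCliffordCoeff ν m * t ^ m)) atTop
      (𝓝 (besselClifford ν (-t))) := by
  simpa only [neg_pow t, mul_left_comm] using
    (hasSum_besselClifford ν (-t)).tendsto_sum_nat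

theorem besselClifford_neg_le (ht : 0 ≤ t) (htν : t ≤ ν + 1) :
    besselClifford ν (-t) ≤ (Real.Gamma (ν + 1))⁻¹ := by
  simpa [besselCliffordCoeff_zero] using
    (antitone_besselCliffordCoeff_mul_pow ht htν).tendsto_le_alternating_series
      (tendsto_alternating_sum_besselClifford ν t) 0

theorem le_besselClifford_neg (ht : 0 ≤ t) (htν : t ≤ ν + 1) :
    (ν + 1 - t) * (Real.Gamma (ν + 2))⁻¹ ≤ besselClifford ν (-t) := by
  have hle := (antitone_besselCliffordCoeff_mul_pow ht htν).alternating_series_le_tendsto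
    (tendsto_alternating_sum_besselClifford ν t) 1
  have hzero := besselCliffordCoeff_eq_mul_add_one ν 0
  have hone := succ_mul_besselCliffordCoeff_succ ν 0
  have hGamma := besselCliffordCoeff_zero (ν + 1)
  rw [add_assoc ν, one_add_one_eq_two] at hGamma
  simp only [mul_one, Finset.sum_range_succ, Finset.range_zero, Finset.sum_empty, pow_zero, pow_one,
    Nat.cast_zero, zero_add, add_zero, one_mul] at hle hzero hone
  rw [hone, hzero, hGamma] at hle
  linarith

theorem besselClifford_neg_pos (ht : 0 ≤ t) (htν : t < ν + 1) : 0 < besselClifford ν (-t) :=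
  (mul_pos (sub_pos.2 htν) (inv_pos.2 (Real.Gamma_pos_of_pos (by linarith)))).trans_le
    (le_besselClifford_neg ht htν.le)

end AlternatingBounds

end BesselClifford

section BesselJ

variable {ν z : ℝ}

theorem besselJ_eq_rpow_mul_besselClifford (ν : ℝ) (hz : 0 < z) :
    besselJ ν z = (z / 2) ^ ν * besselClifford ν (-(z / 2) ^ 2) := by
  rw [besselJ, besselClifford, ← tsum_mul_left]
  refine tsum_congr fun m ↦ ?_
  have hpow : (z / 2) ^ (ν + 2 * (m : ℝ)) = (z / 2) ^ ν * ((z / 2) ^ 2) ^ m := by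
    rw [Real.rpow_add (half_pos hz), ← pow_mul, ← Real.rpow_natCast]
    push_cast
    rfl
  rw [hpow, besselCliffordCoeff, neg_pow ((z / 2) ^ 2)]
  ring

theorem hasDerivAt_besselJ (ν : ℝ) (hz : 0 < z) :
    HasDerivAt (besselJ ν) (ν / z * besselJ ν z - besselJ (ν + 1) z) z := by
  have hhalf : 0 < z / 2 := half_pos hz
  have hid : HasDerivAt (fun y : ℝ ↦ y / 2) (1 / 2) z := (hasDerivAt_id z).div_const 2
  have hpow := hid.rpow_const (p := ν) (Or.inl hhalf.ne')
  have hclifford := (hasDerivAt_besselClifford ν (-(z / 2) ^ 2)).comp z (hid.pow 2).neg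
  have heq : besselJ ν =ᶠ[𝓝 z] fun y ↦ (y / 2) ^ ν * besselClifford ν (-(y / 2) ^ 2) := by
    filter_upwards [Ioi_mem_nhds hz] with y hy
    exact besselJ_eq_rpow_mul_besselClifford ν hy
  refine ((hpow.mul hclifford).congr_of_eventuallyEq heq).congr_deriv ?_
  rw [besselJ_eq_rpow_mul_besselClifford ν hz, besselJ_eq_rpow_mul_besselClifford (ν + 1) hz,
    Real.rpow_sub_one hhalf.ne', Real.rpow_add_one hhalf.ne']
  simp only [Function.comp_apply, Pi.neg_apply, Pi.pow_apply]
  field_simp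
  ring

theorem besselJ_add_besselJ_add_two (ν : ℝ) (hz : 0 < z) :
    besselJ ν z + besselJ (ν + 2) z = 2 * (ν + 1) / z * besselJ (ν + 1) z := by
  have hhalf : 0 < z / 2 := half_pos hz
  simp only [besselJ_eq_rpow_mul_besselClifford _ hz, Real.rpow_add hhalf, Real.rpow_one,
    Real.rpow_two, besselClifford_recurrence ν (-(z / 2) ^ 2)]
  field_simp
  ring

theorem hasDerivAt_besselJ_add_one (ν : ℝ) (hz : 0 < z) :
    HasDerivAt (besselJ (ν + 1)) (besselJ ν z - (ν + 1) / z * besselJ (ν + 1) z) z := by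
  refine (hasDerivAt_besselJ (ν + 1) hz).congr_deriv ?_
  rw [add_assoc ν, one_add_one_eq_two]
  linear_combination -besselJ_add_besselJ_add_two ν hz

theorem besselJ_pos_of_sq_lt (hz : 0 < z) (hzν : (z / 2) ^ 2 < ν + 1) : 0 < besselJ ν z := by
  rw [besselJ_eq_rpow_mul_besselClifford ν hz]
  exact mul_pos (by positivity) (besselClifford_neg_pos (sq_nonneg _) hzν)

theorem besselJ_add_one_lt_of_add_sq_lt (hz : 0 < z) (hzν : z / 2 + (z / 2) ^ 2 < ν + 1) :
    besselJ (ν + 1) z < besselJ ν z := by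
  have hhalf : 0 < z / 2 := half_pos hz
  have hGamma : 0 < Real.Gamma (ν + 2) := Real.Gamma_pos_of_pos (by nlinarith)
  have hclifford : z / 2 * besselClifford (ν + 1) (-(z / 2) ^ 2) <
      besselClifford ν (-(z / 2) ^ 2) := calc
    _ ≤ z / 2 * (Real.Gamma (ν + 1 + 1))⁻¹ := by
      gcongr
      exact besselClifford_neg_le (sq_nonneg _) (by linarith)
    _ = z / 2 * (Real.Gamma (ν + 2))⁻¹ := by rw [add_assoc ν, one_add_one_eq_two]
    _ < (ν + 1 - (z / 2) ^ 2) * (Real.Gamma (ν + 2))⁻¹ := by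
      gcongr
      linarith
    _ ≤ _ := le_besselClifford_neg (sq_nonneg _) (by linarith)
  rw [besselJ_eq_rpow_mul_besselClifford ν hz, besselJ_eq_rpow_mul_besselClifford (ν + 1) hz,
    Real.rpow_add_one hhalf.ne', mul_assoc]
  gcongr

-- The alternating series settles all large orders; since `2 (ν + 1) / z ≥ 2`, the three-term
-- recurrence carries both inequalities from order `ν + 1` down to order `ν`.
theorem besselJ_add_one_pos_and_lt (hz : 0 < z) (hzν : z ≤ ν + 1) :
    0 < besselJ (ν + 1) z ∧ besselJ (ν + 1) z < besselJ ν z := by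
  obtain ⟨n, hn⟩ := exists_nat_gt (z / 2 + (z / 2) ^ 2 - (ν + 1))
  induction n generalizing ν with
  | zero =>
    rw [Nat.cast_zero, sub_lt_iff_lt_add, zero_add] at hn
    exact ⟨besselJ_pos_of_sq_lt hz (by linarith), besselJ_add_one_lt_of_add_sq_lt hz hn⟩
  | succ n ih =>
    rw [Nat.cast_add_one] at hn
    obtain ⟨hpos, hlt⟩ := ih (ν := ν + 1) (by linarith) (by linarith)
    rw [add_assoc ν, one_add_one_eq_two] at hpos hlt
    have hpos' := hpos.trans hlt
    have hfactor : 2 * besselJ (ν + 1) z ≤ 2 * (ν + 1) / z * besselJ (ν + 1) z := by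
      gcongr
      rw [le_div_iff₀ hz]
      gcongr
    exact ⟨hpos', by linarith [besselJ_add_besselJ_add_two ν hz]⟩

-- A common zero of two consecutive orders propagates to all higher orders, where `J` is positive.
theorem besselJ_add_one_ne_zero (hz : 0 < z) (h : besselJ ν z = 0) :
    besselJ (ν + 1) z ≠ 0 := by
  intro h'
  have hzero (n : ℕ) : besselJ (ν + n) z = 0 ∧ besselJ (ν + n + 1) z = 0 := by
    induction n with
    | zero => simpa using ⟨h, h'⟩
    | succ n ih =>
      have hrec := besselJ_add_besselJ_add_two (ν + n) hz
      rw [ih.1, ih.2, zero_add, mul_zero] at hrec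
      rw [Nat.cast_add_one, ← add_assoc, add_assoc (ν + n) 1 1, one_add_one_eq_two]
      exact ⟨ih.2, hrec⟩
  obtain ⟨n, hn⟩ := exists_nat_ge (z - (ν + 1))
  exact (besselJ_add_one_pos_and_lt (ν := ν + n) hz (by linarith)).1.ne' (hzero n).2

end BesselJ

/-- The difference `J_ν - J_{ν+1}`, whose `k`-th positive zero is `λ⁻_{ν,k}`. -/
noncomputable def besselDiff (ν z : ℝ) : ℝ := besselJ ν z - besselJ (ν + 1) z

section BesselDiff

variable {ν z : ℝ}

theorem besselDiff_pos (hz : 0 < z) (hzν : z ≤ ν + 1) : 0 < besselDiff ν z :=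
  sub_pos.2 (besselJ_add_one_pos_and_lt hz hzν).2

theorem eventually_besselDiff_pos (hν : -1 < ν) : ∀ᶠ z in 𝓝[>] 0, 0 < besselDiff ν z := by
  filter_upwards [Ioc_mem_nhdsGT (neg_lt_iff_pos_add.1 hν)] with z hz
  exact besselDiff_pos hz.1 hz.2

theorem add_one_lt_of_besselDiff_eq_zero (hz : 0 < z) (h : besselDiff ν z = 0) : ν + 1 < z := by
  by_contra! hle
  exact (besselDiff_pos hz hle).ne' h

theorem besselJ_ne_zero_of_besselDiff_eq_zero (hz : 0 < z) (h : besselDiff ν z = 0) :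
    besselJ ν z ≠ 0 := fun h0 ↦
  besselJ_add_one_ne_zero hz h0 ((sub_eq_zero.1 h).symm.trans h0)

theorem hasDerivAt_besselDiff (ν : ℝ) (hz : 0 < z) :
    HasDerivAt (besselDiff ν)
      ((ν / z - 1) * besselJ ν z + ((ν + 1) / z - 1) * besselJ (ν + 1) z) z :=
  ((hasDerivAt_besselJ ν hz).sub (hasDerivAt_besselJ_add_one ν hz)).congr_deriv (by ring)

theorem continuousOn_besselDiff (ν : ℝ) : ContinuousOn (besselDiff ν) (Ioi 0) := fun _ hz ↦
  (hasDerivAt_besselDiff ν hz).continuousAt.continuousWithinAt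

theorem deriv_besselDiff_of_eq_zero (hz : 0 < z) (h : besselDiff ν z = 0) :
    deriv (besselDiff ν) z = -((2 * (z - (ν + 1)) + 1) / z * besselJ ν z) := by
  rw [(hasDerivAt_besselDiff ν hz).deriv, ← sub_eq_zero.1 h]
  field_simp
  ring

theorem besselDiff_add_one_of_eq_zero (hz : 0 < z) (h : besselDiff ν z = 0) :
    besselDiff (ν + 1) z = 2 * (z - (ν + 1)) / z * besselJ ν z := by
  have hrec := besselJ_add_besselJ_add_two ν hz
  rw [besselDiff, add_assoc ν, one_add_one_eq_two, eq_sub_of_add_eq' hrec, ← sub_eq_zero.1 h]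
  field_simp
  ring

theorem besselDiff_of_add_one_eq_zero (hz : 0 < z) (h : besselDiff (ν + 1) z = 0) :
    besselDiff ν z = -(2 * (z - (ν + 1)) / z * besselJ (ν + 1) z) := by
  have hrec := besselJ_add_besselJ_add_two ν hz
  rw [besselDiff, sub_eq_zero, add_assoc ν, one_add_one_eq_two] at h
  rw [besselDiff, eq_sub_of_add_eq hrec, ← h]
  field_simp
  ring

theorem deriv_besselDiff_mul_besselDiff_add_one_neg (hz : 0 < z) (h : besselDiff ν z = 0) :
    deriv (besselDiff ν) z * besselDiff (ν + 1) z < 0 := by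
  have hgap : 0 < z - (ν + 1) := sub_pos.2 (add_one_lt_of_besselDiff_eq_zero hz h)
  have hJ := besselJ_ne_zero_of_besselDiff_eq_zero hz h
  rw [deriv_besselDiff_of_eq_zero hz h, besselDiff_add_one_of_eq_zero hz h, neg_mul,
    mul_mul_mul_comm]
  exact neg_neg_of_pos (mul_pos (by positivity) (mul_self_pos.2 hJ))

theorem deriv_besselDiff_add_one_mul_besselDiff_pos (hz : 0 < z) (h : besselDiff (ν + 1) z = 0) :
    0 < deriv (besselDiff (ν + 1)) z * besselDiff ν z := by
  have hgap : 0 < z - (ν + 1 + 1) := sub_pos.2 (add_one_lt_of_besselDiff_eq_zero hz h)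
  have hgap' : 0 < z - (ν + 1) := by linarith
  have hJ := besselJ_ne_zero_of_besselDiff_eq_zero hz h
  rw [deriv_besselDiff_of_eq_zero hz h, besselDiff_of_add_one_eq_zero hz h, neg_mul_neg,
    mul_mul_mul_comm]
  exact mul_pos (by positivity) (mul_self_pos.2 hJ)

end BesselDiff

theorem stmt7_general {ν : ℝ} (hν : 0 < ν) {a b : ℕ → ℝ}
    (ha : EnumPosZeros (fun z ↦ besselJ (ν - 1) z - besselJ ν z) a)
    (hb : EnumPosZeros (fun z ↦ besselJ ν z - besselJ (ν + 1) z) b) {k : ℕ} (hk : 1 ≤ k) :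
    a k < b k ∧ b k < a (k + 1) := by
  obtain ⟨μ, rfl⟩ : ∃ μ, ν = μ + 1 := ⟨ν - 1, by ring⟩
  rw [add_sub_cancel_right] at ha
  exact EnumPosZeros.interlace_of_deriv_mul (f := besselDiff μ) (g := besselDiff (μ + 1)) ha hb
    (continuousOn_besselDiff μ) (continuousOn_besselDiff (μ + 1))
    (eventually_besselDiff_pos (by linarith)) (eventually_besselDiff_pos (by linarith))
    (fun _ ↦ deriv_besselDiff_mul_besselDiff_add_one_neg)
    (fun _ ↦ deriv_besselDiff_add_one_mul_besselDiff_pos) hk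

/-- For `ν ≥ 1` and every `k ≥ 1`,
`λ⁻_{ν,k+1} < λ⁻_{ν−1,k+2} < λ⁻_{ν,k+2}`: the positive zeroes of differences of Bessel
functions of consecutive orders interlace. -/
theorem stmt7 (ν : ℝ) (hν : 1 ≤ ν) (k : ℕ) (hk : 1 ≤ k)
    (lamm1 lamn : ℕ → ℝ)
    (hlamm1 : EnumPosZeros (fun z => besselJ (ν - 1) z - besselJ ν z) lamm1)
    (hlamn : EnumPosZeros (fun z => besselJ ν z - besselJ (ν + 1) z) lamn) :
    lamn (k + 1) < lamm1 (k + 2) ∧ lamm1 (k + 2) < lamn (k + 2) := by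
  have interlace := @stmt7_general ν (by linarith) lamm1 lamn hlamm1 hlamn
  exact ⟨(interlace (by lia : 1 ≤ k + 1)).2, (interlace (by lia : 1 ≤ k + 2)).1⟩
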